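/- Let G = QB_m(N) be a quasi-banana graph with distinguished vertex u_{0,1}. Then the divisor u_{0,1} + Σ_{w∈V(G)} w realises the second gonality of G (i.e. it has rank 2 and degree gon_2(G)). -/

import Mathlib

open Finset

variable {V : Type*} [Fintype V] [DecidableEq V]

/-- A finite loopless multigraph on vertex type `V`, given by symmetric edge multiplicities. -/
structure Multigraph (V : Type*) [Fintype V] [DecidableEq V] where
  mult : V → V → ℕ
  symm : ∀ u v, mult u v = mult v u
  loopless : ∀ v, mult v v = 0

namespace Multigraph

def Adj (G : Multigraph V) (u v : V) : Prop := 0 < G.mult u v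

/-- A graph is connected. -/
def Connected (G : Multigraph V) : Prop :=
  Nonempty V ∧ ∀ u v : V, Relation.ReflTransGen G.Adj u v

/-- Valence of a vertex. -/
def valence (G : Multigraph V) (v : V) : ℕ := ∑ u, G.mult v u

/-- The Laplacian applied to an integer-valued function on the vertices. -/
def laplacian (G : Multigraph V) (f : V → ℤ) : V → ℤ :=
  fun w => ∑ u, (G.mult w u : ℤ) * (f w - f u)

/-- Degree of a divisor. -/
def degree (D : V → ℤ) : ℤ := ∑ v, D v

/-- A divisor is effective if all coefficients are nonnegative. -/
def Effective (D : V → ℤ) : Prop := ∀ v, 0 ≤ D v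

/-- Linear equivalence of divisors: they differ by a sequence of chip-firing moves,
equivalently by a Laplacian of an integer function. -/
def LinEquiv (G : Multigraph V) (D D' : V → ℤ) : Prop :=
  ∃ f : V → ℤ, D' = D - G.laplacian f

/-- A divisor is winnable if it is linearly equivalent to an effective divisor. -/
def Winnable (G : Multigraph V) (D : V → ℤ) : Prop :=
  ∃ E : V → ℤ, Effective E ∧ G.LinEquiv D E

/-- The Baker–Norine rank of a divisor: the largest `r` such that `D - E` is winnable for
every effective divisor `E` of degree `r` (the defining set contains all negative integers,
and its supremum is `-1` precisely when `D` itself is not winnable). -/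
noncomputable def rank (G : Multigraph V) (D : V → ℤ) : ℤ :=
  sSup {r : ℤ | ∀ E : V → ℤ, Effective E → degree E = r → G.Winnable (fun w => D w - E w)}

/-- The `k`-th gonality of a graph: the smallest degree of a divisor of rank `k`. -/
noncomputable def gonality (G : Multigraph V) (k : ℤ) : ℤ :=
  sInf {d : ℤ | ∃ D : V → ℤ, G.rank D = k ∧ degree D = d}

/-- A graph is gonality-tight if its second gonality exceeds its first by exactly 1. -/
def GonalityTight (G : Multigraph V) : Prop :=
  G.gonality 2 = G.gonality 1 + 1

/-- A divisor realises the `k`-th gonality if it has rank `k` and degree `gon_k(G)`. -/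
def Realises (G : Multigraph V) (k : ℤ) (D : V → ℤ) : Prop :=
  G.rank D = k ∧ degree D = G.gonality k

/-- A divisor is `v`-reduced: nonnegative away from `v`, and set-firing any nonempty set of
vertices not containing `v` creates a negative coefficient inside the set. -/
def Reduced (G : Multigraph V) (v : V) (D : V → ℤ) : Prop :=
  (∀ w, w ≠ v → 0 ≤ D w) ∧
    ∀ U : Finset V, U.Nonempty → v ∉ U →
      ∃ w ∈ U, D w - ∑ u ∈ Uᶜ, (G.mult w u : ℤ) < 0

/-- The genus (first Betti number) of a graph: `|E| - |V| + 1`. -/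
def genus (G : Multigraph V) : ℤ :=
  ((∑ u, ∑ v, G.mult u v : ℕ) : ℤ) / 2 - Fintype.card V + 1

/-- The canonical divisor of a graph. -/
def canonical (G : Multigraph V) : V → ℤ :=
  fun w => (G.valence w : ℤ) - 2

/-- The subgraph induced on a set `S` of vertices (with all edges among `S`). -/
def induce (G : Multigraph V) (S : Finset V) : Multigraph {x // x ∈ S} where
  mult a b := G.mult a b
  symm a b := G.symm a b
  loopless a := G.loopless a

/-- `G.SeparatedBy u w v` means every path from `w` to `v` passes through `u`. -/
def SeparatedBy (G : Multigraph V) (u w v : V) : Prop :=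
  ¬ Relation.ReflTransGen (fun x y => G.Adj x y ∧ x ≠ u ∧ y ≠ u) w v

end Multigraph

/-- Size of the `i`-th level of a quasi-banana graph: level `0` has a single vertex. -/
def qbSize (q : ℕ → ℕ) (i : ℕ) : ℕ := if i = 0 then 1 else q i

/-- `ℓ` is a quasi-banana labelling of `G` exhibiting `G ≅ QB_m(q_1, …, q_m)`:
`ℓ` is a bijection onto the pairs `(i, j)` with `i ≤ m`, `1 ≤ j ≤ qbSize q i`
(vertex `u_{i,j}` is the vertex labelled `(i,j)`), and the edge multiplicities are:
one edge between distinct vertices of the same level, `(∑_{k=1}^{i} q_k) + 2` edges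
between `u_{i,1}` and each `u_{i+1,j}`, and no other edges. -/
def Multigraph.IsQBLabelling (G : Multigraph V) (m : ℕ) (q : ℕ → ℕ) (ℓ : V → ℕ × ℕ) : Prop :=
  (∀ i, 1 ≤ i → i ≤ m → 0 < q i) ∧
  Function.Injective ℓ ∧
  (∀ v : V, (ℓ v).1 ≤ m ∧ 1 ≤ (ℓ v).2 ∧ (ℓ v).2 ≤ qbSize q (ℓ v).1) ∧
  (∀ i j : ℕ, i ≤ m → 1 ≤ j → j ≤ qbSize q i → ∃ v, ℓ v = (i, j)) ∧
  (∀ v w : V, v ≠ w → G.mult v w =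
    if (ℓ v).1 = (ℓ w).1 then 1
    else if (ℓ v).1 + 1 = (ℓ w).1 ∧ (ℓ v).2 = 1 then (∑ i ∈ Finset.Icc 1 (ℓ v).1, q i) + 2
    else if (ℓ w).1 + 1 = (ℓ v).1 ∧ (ℓ w).2 = 1 then (∑ i ∈ Finset.Icc 1 (ℓ w).1, q i) + 2
    else 0)

/-- A graph is a quasi-banana graph if it is isomorphic to some `QB_m(N)`. -/
def Multigraph.IsQuasiBanana (G : Multigraph V) : Prop :=
  ∃ (m : ℕ) (q : ℕ → ℕ) (ℓ : V → ℕ × ℕ), G.IsQBLabelling m q ℓ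

/-- The graph obtained from `G'` by attaching a complete graph `K_n`: `n` new vertices
pairwise joined by exactly one edge, each joined to `v` by exactly `k+1` edges. -/
def attachComplete (G' : Multigraph V) (v : V) (k n : ℕ) : Multigraph (V ⊕ Fin n) where
  mult x y :=
    match x, y with
    | Sum.inl a, Sum.inl b => G'.mult a b
    | Sum.inl a, Sum.inr _ => if a = v then k + 1 else 0
    | Sum.inr _, Sum.inl b => if b = v then k + 1 else 0
    | Sum.inr i, Sum.inr j => if i = j then 0 else 1
  symm := by
    rintro (a | i) (b | j)
    · exact G'.symm a b
    · rfl
    · rfl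
    · by_cases h : i = j
      · simp [h]
      · simp [h, Ne.symm h]
  loopless := by
    rintro (a | i)
    · exact G'.loopless a
    · simp

/-!
Write `n i` for the number of vertices on the levels `0, …, i`. There are `n i + 1` edges between
`u_{i,1}` and each vertex of level `i + 1`.

For the rank, let `v` have level `i` and consider the divisor with `n i + 1` chips on `v` and one
chip on every vertex of level greater than `i`; for `v = u_{0,1}` this is the divisor of the
theorem. If `v = u_{i,1}` and `w` has level `i + 1`, firing everything except `w` and the vertices
separated from `v` by `w` turns the divisor of `v` into that of `w`. Hence two chips can be moved
to any given vertex.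

For the gonality, suppose that `D` is effective of positive rank and of degree less than `|V|`. By
descending induction on `i`, every firing script with effective outcome takes the same value on
`v = u_{i,1}` and on each `w` of level `i + 1`. Indeed, by induction these scripts leave the
number of chips on each vertex above level `i + 1` unchanged, and since the rank is positive that
number is at least one. If the script separates `v` from `w`, then some stage of it fires a set
separating `v` from `w`, which needs `n (i + 1)` chips on the levels up to `i + 1`; together with
the chips above, these are `|V|` chips, a contradiction. So no chip moves at all, and positivity of
the rank puts a chip of `D` on each vertex, again a contradiction. Thus divisors of positive rank
have degree at least `|V|`, and those of rank two have degree at least `|V| + 1`.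
-/

namespace Multigraph

/-! ### Divisors and the Laplacian -/

section Divisor

omit [DecidableEq V]

lemma degree_add (D E : V → ℤ) : degree (D + E) = degree D + degree E :=
  sum_add_distrib

lemma degree_sub (D E : V → ℤ) : degree (D - E) = degree D - degree E :=
  sum_sub_distrib D E

lemma Effective.degree_nonneg {D : V → ℤ} (hD : Effective D) : 0 ≤ degree D :=
  sum_nonneg fun v _ => hD v

lemma eq_of_degree_eq_of_forall_ne {D E : V → ℤ} (w : V) (hdeg : degree D = degree E)
    (h : ∀ x, x ≠ w → D x = E x) : D = E := by
  have hw : D w = E w := by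
    have hsum : degree (D - E) = (D - E) w :=
      Fintype.sum_eq_single w fun x hx => sub_eq_zero.2 (h x hx)
    rw [degree_sub, hdeg, sub_self] at hsum
    exact sub_eq_zero.1 hsum.symm
  funext x
  by_cases hx : x = w
  · rw [hx, hw]
  · exact h x hx

omit [Fintype V] in
lemma Effective.add {D E : V → ℤ} (hD : Effective D) (hE : Effective E) : Effective (D + E) :=
  fun v => add_nonneg (hD v) (hE v)

end Divisor

lemma degree_single (v : V) (r : ℤ) : degree (Pi.single v r) = r := by
  simp [degree]

omit [Fintype V] in
lemma effective_single (v : V) {r : ℤ} (hr : 0 ≤ r) : Effective (Pi.single v r) :=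
  show (0 : V → ℤ) ≤ Pi.single v r from Pi.single_nonneg.2 hr

section Laplacian

variable (G : Multigraph V)

lemma laplacian_add (f g : V → ℤ) :
    G.laplacian (f + g) = G.laplacian f + G.laplacian g := by
  funext x
  simp only [laplacian, Pi.add_apply, ← sum_add_distrib]
  exact sum_congr rfl fun u _ => by ring

lemma laplacian_zero : G.laplacian 0 = 0 :=
  (AddMonoidHom.mk' G.laplacian G.laplacian_add).map_zero

lemma laplacian_neg (f : V → ℤ) : G.laplacian (-f) = -G.laplacian f :=
  (AddMonoidHom.mk' G.laplacian G.laplacian_add).map_neg f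

lemma degree_laplacian (f : V → ℤ) : degree (G.laplacian f) = 0 := by
  have hneg : degree (G.laplacian f) = -degree (G.laplacian f) := by
    calc ∑ x, ∑ u, (G.mult x u : ℤ) * (f x - f u)
        = ∑ x, ∑ u, (G.mult u x : ℤ) * (f u - f x) := sum_comm
      _ = -∑ x, ∑ u, (G.mult x u : ℤ) * (f x - f u) := by
          simp only [← sum_neg_distrib]
          exact sum_congr rfl fun x _ => sum_congr rfl fun u _ => by rw [G.symm u x]; ring
  omega

lemma laplacian_indicator_of_mem {U : Finset V} {x : V} (hx : x ∈ U) :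
    G.laplacian ((U : Set V).indicator 1) x = ∑ y ∈ Uᶜ, (G.mult x y : ℤ) := by
  rw [laplacian, ← sum_compl_add_sum U]
  simp +contextual [sum_congr, Set.indicator_apply, hx]

lemma laplacian_indicator_of_notMem {U : Finset V} {x : V} (hx : x ∉ U) :
    G.laplacian ((U : Set V).indicator 1) x = -∑ y ∈ U, (G.mult x y : ℤ) := by
  rw [laplacian, ← sum_compl_add_sum U]
  simp +contextual [sum_congr, Set.indicator_apply, hx]

lemma laplacian_eq_zero_of_forall_adj {f : V → ℤ} {x : V} (h : ∀ y, G.Adj x y → f x = f y) :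
    G.laplacian f x = 0 := by
  refine sum_eq_zero fun y _ => ?_
  rcases (G.mult x y).eq_zero_or_pos with hxy | hxy
  · rw [hxy, Nat.cast_zero, zero_mul]
  · rw [h y hxy, sub_self, mul_zero]

end Laplacian

variable {G : Multigraph V} {D D' E : V → ℤ}

/-! ### Linear equivalence and rank -/

lemma LinEquiv.refl (G : Multigraph V) (D : V → ℤ) : G.LinEquiv D D :=
  ⟨0, by rw [laplacian_zero, sub_zero]⟩

lemma LinEquiv.symm (h : G.LinEquiv D D') : G.LinEquiv D' D := by
  obtain ⟨f, rfl⟩ := h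
  exact ⟨-f, by rw [laplacian_neg]; abel⟩

lemma LinEquiv.trans (h : G.LinEquiv D D') (h' : G.LinEquiv D' E) : G.LinEquiv D E := by
  obtain ⟨f, rfl⟩ := h
  obtain ⟨g, rfl⟩ := h'
  exact ⟨f + g, by rw [laplacian_add]; abel⟩

lemma LinEquiv.sub_right (h : G.LinEquiv D D') (E : V → ℤ) : G.LinEquiv (D - E) (D' - E) := by
  obtain ⟨f, rfl⟩ := h
  exact ⟨f, by abel⟩

lemma LinEquiv.degree_eq (h : G.LinEquiv D D') : degree D = degree D' := by
  obtain ⟨f, rfl⟩ := h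
  rw [degree_sub, degree_laplacian, sub_zero]

lemma Winnable.degree_nonneg (h : G.Winnable D) : 0 ≤ degree D := by
  obtain ⟨E, hE, hDE⟩ := h
  exact hDE.degree_eq ▸ hE.degree_nonneg

lemma LinEquiv.winnable_sub (h : G.LinEquiv D D') (hE : E ≤ D') : G.Winnable (D - E) :=
  ⟨D' - E, sub_nonneg.2 hE, h.sub_right E⟩

lemma Winnable.mono (h : G.Winnable D) (hD : D ≤ D') : G.Winnable D' := by
  obtain ⟨E, hE, hDE⟩ := h
  have hle : D - D' ≤ E := (sub_nonpos.2 hD).trans hE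
  simpa only [sub_sub_cancel] using hDE.winnable_sub hle

lemma isGreatest_rank [Nonempty V] (G : Multigraph V) (D : V → ℤ) :
    IsGreatest {r : ℤ | ∀ E, Effective E → degree E = r → G.Winnable (D - E)} (G.rank D) := by
  have hbdd : BddAbove
      {r : ℤ | ∀ E, Effective E → degree E = r → G.Winnable (D - E)} := by
    refine ⟨max (degree D) 0, fun r hr => le_max_iff.2 (or_iff_not_imp_right.2 fun hr0 => ?_)⟩
    obtain ⟨v⟩ := ‹Nonempty V›
    have hdeg := (hr _ (effective_single v (not_le.1 hr0).le) (degree_single v r)).degree_nonneg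
    rwa [degree_sub, degree_single, sub_nonneg] at hdeg
  have hne : (-1 : ℤ) ∈ {r : ℤ | ∀ E, Effective E → degree E = r → G.Winnable (D - E)} :=
    fun E hE hdeg => absurd hE.degree_nonneg (by omega)
  exact ⟨Int.csSup_mem ⟨-1, hne⟩ hbdd, fun r hr => le_csSup hbdd hr⟩

lemma le_rank_iff [Nonempty V] {k : ℤ} :
    k ≤ G.rank D ↔ ∀ E, Effective E → degree E = k → G.Winnable (D - E) := by
  refine ⟨fun hk E hE hdeg => ?_, fun h => (isGreatest_rank G D).2 h⟩
  obtain ⟨v⟩ := ‹Nonempty V›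
  have hF := effective_single v (sub_nonneg.2 hk)
  refine ((isGreatest_rank G D).1 (E + Pi.single v (G.rank D - k)) (hE.add hF) ?_).mono
    (sub_le_sub_left (le_add_of_nonneg_right hF) D)
  rw [degree_add, degree_single, hdeg, add_sub_cancel]

lemma le_rank_sub [Nonempty V] {k : ℤ} (hE : Effective E) (h : k + degree E ≤ G.rank D) :
    k ≤ G.rank (D - E) :=
  le_rank_iff.2 fun F hF hdeg => by
    rw [sub_sub, add_comm E F]
    exact le_rank_iff.1 h (F + E) (hF.add hE) (by rw [degree_add, hdeg])

lemma exists_effective_pos_of_one_le_rank [Nonempty V] (h : 1 ≤ G.rank D) (w : V) :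
    ∃ E, Effective E ∧ 0 < E w ∧ G.LinEquiv D E := by
  have hw := effective_single w zero_le_one
  obtain ⟨E, hE, hDE⟩ := le_rank_iff.1 h _ hw (degree_single w 1)
  refine ⟨E + Pi.single w 1, hE.add hw, ?_, ?_⟩
  · rw [Pi.add_apply, Pi.single_eq_same]
    exact Int.lt_add_one_of_le (hE w)
  · simpa using hDE.sub_right (-Pi.single w 1)

lemma two_le_rank [Nonempty V] (hone : ∀ v, 1 ≤ D v)
    (htwo : ∀ v, ∃ D', Effective D' ∧ 2 ≤ D' v ∧ G.LinEquiv D D') : 2 ≤ G.rank D := by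
  refine le_rank_iff.2 fun E hE hdeg => ?_
  by_cases hle : ∀ v, E v ≤ 1
  · exact (LinEquiv.refl G D).winnable_sub fun v => (hle v).trans (hone v)
  · push Not at hle
    obtain ⟨w, hw⟩ := hle
    obtain ⟨D', hD', hw2, hDD'⟩ := htwo w
    refine hDD'.winnable_sub fun x => ?_
    by_cases hx : x = w
    · have hEw : E w ≤ degree E := single_le_sum (fun v _ => hE v) (mem_univ w)
      exact hx ▸ hEw.trans (hdeg.trans_le hw2)
    · have hEx : E w + E x ≤ degree E :=
        add_le_sum (fun v _ => hE v) (mem_univ w) (mem_univ x) (Ne.symm hx)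
      have hEx0 : E x ≤ 0 := by omega
      exact hEx0.trans (hD' x)

lemma realises_of_forall_degree_le [Nonempty V] {k : ℤ} (hD : k ≤ G.rank D)
    (hmin : ∀ D', k ≤ G.rank D' → degree D ≤ degree D') : G.Realises k D := by
  have hrank : G.rank D = k := by
    refine le_antisymm (Int.lt_add_one_iff.1 (lt_of_not_ge fun h => ?_)) hD
    obtain ⟨v⟩ := ‹Nonempty V›
    have hdeg := hmin _ (le_rank_sub (effective_single v zero_le_one)
      (by rwa [degree_single v (1 : ℤ)]))
    rw [degree_sub, degree_single] at hdeg
    omega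
  refine ⟨hrank, Eq.symm (IsLeast.csInf_eq ⟨⟨D, hrank, rfl⟩, ?_⟩)⟩
  rintro _ ⟨D', hD', rfl⟩
  exact hmin D' hD'.ge

/-! ### Truncated firing scripts -/

lemma effective_sub_laplacian_max {f : V → ℤ} (hD : Effective D)
    (hf : Effective (D - G.laplacian f)) (t : ℤ) :
    Effective (D - G.laplacian fun x => max (f x) t) := by
  intro x
  rw [Pi.sub_apply, sub_nonneg]
  rcases le_total t (f x) with hx | hx
  · refine le_trans (sum_le_sum fun u _ => ?_) (sub_nonneg.1 (hf x))
    exact mul_le_mul_of_nonneg_left (by dsimp only; omega) (Nat.cast_nonneg _)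
  · refine le_trans (sum_nonpos fun u _ => ?_) (hD x)
    exact mul_nonpos_of_nonneg_of_nonpos (Nat.cast_nonneg _) (by dsimp only; omega)

lemma exists_firing_separating {f : V → ℤ} (hD : Effective D)
    (hf : Effective (D - G.laplacian f)) {x y : V} (hxy : f x ≠ f y) :
    ∃ (D' : V → ℤ) (U : Finset V), G.LinEquiv D D' ∧ Effective D' ∧
      Effective (D' - G.laplacian ((U : Set V).indicator 1)) ∧ ¬(x ∈ U ↔ y ∈ U) := by
  set t := min (f x) (f y)
  set U : Finset V := {z | t < f z} with hU
  refine ⟨D - G.laplacian fun z => max (f z) (t + 1), U, ⟨_, rfl⟩,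
    effective_sub_laplacian_max hD hf _, ?_, by simp only [hU, mem_filter_univ]; omega⟩
  have hshift : G.laplacian (fun z => max (f z) t) =
      G.laplacian (fun z => max (f z) (t + 1)) + G.laplacian ((U : Set V).indicator 1) := by
    rw [← laplacian_add]
    funext z
    refine sum_congr rfl fun u _ => congrArg _ ?_
    simp only [Pi.add_apply, Set.indicator_apply, hU, mem_coe, mem_filter_univ, Pi.one_apply]
    split_ifs <;> omega
  rw [sub_sub, ← hshift]
  exact effective_sub_laplacian_max hD hf t

/-! ### Levels of a quasi-banana graph -/

section Levels

variable (ℓ : V → ℕ × ℕ)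

/-- The vertices of a quasi-banana graph that lie on level `i`. -/
def level (i : ℕ) : Finset V := {x | (ℓ x).1 = i}

/-- The vertices of a quasi-banana graph that lie on the levels `0, …, i`. -/
def lowerLevels (i : ℕ) : Finset V := {x | (ℓ x).1 ≤ i}

/-- `v` is the vertex `u_{i,1}` and `w` is one of the vertices `u_{i+1,j}` hanging from it. -/
def IsParent (v w : V) : Prop := (ℓ v).1 + 1 = (ℓ w).1 ∧ (ℓ v).2 = 1

/-- The vertex `w` together with everything that is cut off from `u_{0,1}` by removing `w`: all
higher levels if `w` is some `u_{i,1}`, and nothing otherwise. -/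
def branch (w : V) : Finset V := {x | x = w ∨ (ℓ w).2 = 1 ∧ (ℓ w).1 < (ℓ x).1}

/-- The divisor with one chip on every vertex above the level of `w`, none on the rest of the
levels up to that of `w`, and on `w` itself one chip more than there are vertices on these levels.
These divisors are all linearly equivalent; that of `u_{0,1}` is the divisor of the theorem. -/
def pile (w : V) : V → ℤ :=
  Pi.single w (#(lowerLevels ℓ (ℓ w).1) + 1 : ℤ) +
    fun x => if (ℓ w).1 < (ℓ x).1 then 1 else 0

variable {ℓ}

omit [DecidableEq V] in
@[simp] lemma mem_level {i : ℕ} {x : V} : x ∈ level ℓ i ↔ (ℓ x).1 = i := mem_filter_univ x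

omit [DecidableEq V] in
@[simp] lemma mem_lowerLevels {i : ℕ} {x : V} : x ∈ lowerLevels ℓ i ↔ (ℓ x).1 ≤ i :=
  mem_filter_univ x

@[simp] lemma mem_branch {w x : V} :
    x ∈ branch ℓ w ↔ x = w ∨ (ℓ w).2 = 1 ∧ (ℓ w).1 < (ℓ x).1 :=
  mem_filter_univ x

omit [DecidableEq V] in
lemma card_lowerLevels_succ (i : ℕ) :
    #(lowerLevels ℓ (i + 1)) = #(lowerLevels ℓ i) + #(level ℓ (i + 1)) := by
  classical
  rw [← card_union_of_disjoint (disjoint_left.2 fun x => by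
    simp only [mem_lowerLevels, mem_level]; omega)]
  congr 1
  ext x
  simp [Nat.le_succ_iff]

lemma pile_self (w : V) : pile ℓ w w = #(lowerLevels ℓ (ℓ w).1) + 1 := by
  simp [pile]

lemma pile_of_ne {w x : V} (hx : x ≠ w) :
    pile ℓ w x = if (ℓ w).1 < (ℓ x).1 then 1 else 0 := by
  simp [pile, hx]

lemma effective_pile (w : V) : Effective (pile ℓ w) :=
  (effective_single w (by positivity)).add fun x => by positivity

lemma degree_pile (w : V) : degree (pile ℓ w) = Fintype.card V + 1 := by
  have habove : degree (fun x => if (ℓ w).1 < (ℓ x).1 then 1 else 0) =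
      #(lowerLevels ℓ (ℓ w).1)ᶜ := by
    rw [degree, sum_boole]
    congr 2
    ext x
    simp
  rw [pile, degree_add, degree_single, habove, ← card_add_card_compl (lowerLevels ℓ (ℓ w).1)]
  push_cast
  ring

end Levels

namespace IsQBLabelling

variable {m : ℕ} {q : ℕ → ℕ} {ℓ : V → ℕ × ℕ}

lemma injective (h : G.IsQBLabelling m q ℓ) : Function.Injective ℓ :=
  h.2.1

lemma eq_of_fst_eq_of_snd_eq (h : G.IsQBLabelling m q ℓ) {x y : V} (h1 : (ℓ x).1 = (ℓ y).1)
    (h2 : (ℓ x).2 = (ℓ y).2) : x = y :=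
  h.injective (Prod.ext h1 h2)

lemma fst_le (h : G.IsQBLabelling m q ℓ) (x : V) : (ℓ x).1 ≤ m :=
  (h.2.2.1 x).1

lemma eq_zero_one_of_fst_eq_zero (h : G.IsQBLabelling m q ℓ) {x : V} (hx : (ℓ x).1 = 0) :
    ℓ x = (0, 1) := by
  obtain ⟨-, h1, h2⟩ := h.2.2.1 x
  rw [hx, qbSize, if_pos rfl] at h2
  exact Prod.ext hx (le_antisymm h2 h1)

lemma exists_eq_mk_one (h : G.IsQBLabelling m q ℓ) {i : ℕ} (hi : i ≤ m) :
    ∃ v, ℓ v = (i, 1) := by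
  refine h.2.2.2.1 i 1 hi le_rfl ?_
  rw [qbSize]
  split_ifs with h0
  · exact le_rfl
  · exact h.1 i (Nat.one_le_iff_ne_zero.2 h0) hi

lemma exists_isParent (h : G.IsQBLabelling m q ℓ) {w : V} (hw : (ℓ w).1 ≠ 0) :
    ∃ v, IsParent ℓ v w := by
  obtain ⟨v, hv⟩ := h.exists_eq_mk_one ((Nat.sub_le _ 1).trans (h.fst_le w))
  exact ⟨v, by rw [hv]; exact Nat.sub_one_add_one hw, by rw [hv]⟩

lemma isParent_unique (h : G.IsQBLabelling m q ℓ) {u v w : V} (hu : IsParent ℓ u w)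
    (hv : IsParent ℓ v w) : u = v :=
  h.eq_of_fst_eq_of_snd_eq (Nat.succ_injective (hu.1.trans hv.1.symm)) (hu.2.trans hv.2.symm)

lemma card_level (h : G.IsQBLabelling m q ℓ) {i : ℕ} (hi : i ≤ m) :
    #(level ℓ i) = qbSize q i := by
  have himage : (level ℓ i).image ℓ = {i} ×ˢ Icc 1 (qbSize q i) := by
    ext ⟨a, b⟩
    simp only [mem_image, mem_level, mem_product, mem_singleton, mem_Icc]
    constructor
    · rintro ⟨x, rfl, hx⟩
      have hb := (h.2.2.1 x).2
      rw [hx] at hb ⊢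
      exact ⟨rfl, hb⟩
    · rintro ⟨rfl, hb⟩
      obtain ⟨v, hv⟩ := h.2.2.2.1 a b hi hb.1 hb.2
      exact ⟨v, by rw [hv], hv⟩
  rw [← card_image_of_injective _ h.injective, himage]
  simp

lemma card_lowerLevels (h : G.IsQBLabelling m q ℓ) {i : ℕ} (hi : i ≤ m) :
    #(lowerLevels ℓ i) = ∑ k ∈ Icc 1 i, q k + 1 := by
  induction i with
  | zero =>
    have hzero : lowerLevels ℓ 0 = level ℓ 0 := by ext; simp
    rw [hzero, h.card_level hi]
    simp [qbSize]
  | succ i ih =>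
    rw [card_lowerLevels_succ, ih (Nat.le_of_succ_le hi), h.card_level hi,
      sum_Icc_succ_top (Nat.le_add_left 1 i), qbSize, if_neg i.succ_ne_zero]
    ring

lemma mult_of_fst_eq (h : G.IsQBLabelling m q ℓ) {x y : V} (hne : x ≠ y)
    (hxy : (ℓ x).1 = (ℓ y).1) : G.mult x y = 1 := by
  rw [h.2.2.2.2 x y hne, if_pos hxy]

lemma mult_of_isParent (h : G.IsQBLabelling m q ℓ) {v w : V} (hvw : IsParent ℓ v w) :
    G.mult v w = #(lowerLevels ℓ (ℓ v).1) + 1 := by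
  have hlt : (ℓ v).1 ≠ (ℓ w).1 := by have := hvw.1; omega
  have hne : v ≠ w := fun e => hlt (e ▸ rfl)
  rw [h.2.2.2.2 v w hne, if_neg hlt, h.card_lowerLevels (h.fst_le v)]
  exact if_pos hvw

lemma fst_eq_or_isParent_of_adj (h : G.IsQBLabelling m q ℓ) {x y : V} (hxy : G.Adj x y) :
    (ℓ x).1 = (ℓ y).1 ∨ IsParent ℓ x y ∨ IsParent ℓ y x := by
  by_cases hne : x = y
  · exact .inl (hne ▸ rfl)
  rw [Adj, h.2.2.2.2 x y hne] at hxy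
  simp only [IsParent]
  split_ifs at hxy <;> tauto

/-! ### Moving the pile of chips -/

lemma mult_eq_zero_of_mem_branch (h : G.IsQBLabelling m q ℓ) {w x y : V} (hx : x ∈ branch ℓ w)
    (hxw : x ≠ w) (hy : y ∉ branch ℓ w) : G.mult x y = 0 := by
  by_contra hmult
  rw [mem_branch] at hx hy
  push Not at hy
  obtain ⟨hw, hwx⟩ := hx.resolve_left hxw
  have hyw := hy.2 hw
  rcases h.fst_eq_or_isParent_of_adj (Nat.pos_of_ne_zero hmult) with hxy | ⟨hxy, -⟩ | ⟨hyx, hy1⟩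
  · omega
  · omega
  · exact hy.1 (h.eq_of_fst_eq_of_snd_eq (by omega) (by omega))

lemma pile_sub_mult_of_notMem_branch (h : G.IsQBLabelling m q ℓ) {v w x : V}
    (hvw : IsParent ℓ v w) (hx : x ∉ branch ℓ w) : pile ℓ v x - G.mult x w = pile ℓ w x := by
  have hlevel := hvw.1
  rw [mem_branch] at hx
  push Not at hx
  rw [pile_of_ne hx.1]
  by_cases hxv : x = v
  · rw [hxv, pile_self, h.mult_of_isParent hvw, if_neg (by omega)]
    push_cast
    ring
  rw [pile_of_ne hxv]
  by_cases hxw : (ℓ x).1 = (ℓ w).1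
  · rw [h.mult_of_fst_eq hx.1 hxw, if_pos (by omega), if_neg (by omega), Nat.cast_one, sub_self]
  · have hmult : G.mult x w = 0 := by
      by_contra hmult
      rcases h.fst_eq_or_isParent_of_adj (Nat.pos_of_ne_zero hmult) with hxw' | hxw' | hwx
      · exact hxw hxw'
      · exact hxv (h.isParent_unique hxw' hvw)
      · exact (hx.2 hwx.2).not_gt (Nat.lt_of_succ_le hwx.1.le)
    rw [hmult, Nat.cast_zero, sub_zero]
    exact if_congr (by omega) rfl rfl

lemma pile_linEquiv_of_isParent (h : G.IsQBLabelling m q ℓ) {v w : V} (hvw : IsParent ℓ v w) :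
    G.LinEquiv (pile ℓ v) (pile ℓ w) := by
  -- Away from `w` the two sides are compared directly; the value at `w` then follows from degrees.
  refine ⟨-(branch ℓ w : Set V).indicator 1, eq_of_degree_eq_of_forall_ne w ?_ fun x hx => ?_⟩
  · rw [degree_sub, degree_laplacian, degree_pile, degree_pile, sub_zero]
  · rw [Pi.sub_apply, laplacian_neg, Pi.neg_apply]
    by_cases hxw : x ∈ branch ℓ w
    · have hcut : ∑ y ∈ (branch ℓ w)ᶜ, (G.mult x y : ℤ) = 0 :=
        sum_eq_zero fun y hy =>
          Nat.cast_eq_zero.2 (h.mult_eq_zero_of_mem_branch hxw hx (mem_compl.1 hy))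
      have hlt := ((mem_branch.1 hxw).resolve_left hx).2
      have hvx : (ℓ v).1 < (ℓ x).1 := by have := hvw.1; omega
      rw [laplacian_indicator_of_mem G hxw, hcut, pile_of_ne hx,
        pile_of_ne (fun e : x = v => hvx.ne (e ▸ rfl)), if_pos hlt, if_pos hvx, neg_zero, sub_zero]
    · have hcut : ∑ y ∈ branch ℓ w, (G.mult x y : ℤ) = G.mult x w :=
        sum_eq_single_of_mem w (by simp) fun y hy hyw => by
          rw [G.symm, h.mult_eq_zero_of_mem_branch hy hyw hxw, Nat.cast_zero]
      rw [laplacian_indicator_of_notMem G hxw, hcut, neg_neg,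
        h.pile_sub_mult_of_notMem_branch hvw hxw]

lemma pile_root_linEquiv (h : G.IsQBLabelling m q ℓ) {u : V} (hu : ℓ u = (0, 1)) (w : V) :
    G.LinEquiv (pile ℓ u) (pile ℓ w) := by
  induction hi : (ℓ w).1 generalizing w with
  | zero =>
    rw [h.injective (hu.trans (h.eq_zero_one_of_fst_eq_zero hi).symm)]
    exact LinEquiv.refl G _
  | succ i ih =>
    obtain ⟨v, hvw⟩ := h.exists_isParent (by omega : (ℓ w).1 ≠ 0)
    exact (ih v (Nat.succ_injective (hvw.1.trans hi))).trans (h.pile_linEquiv_of_isParent hvw)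

lemma pile_root (h : G.IsQBLabelling m q ℓ) {u : V} (hu : ℓ u = (0, 1)) :
    pile ℓ u = fun x => (if ℓ x = (0, 1) then 1 else 0) + 1 := by
  funext x
  by_cases hx : x = u
  · rw [hx, pile_self, hu, h.card_lowerLevels m.zero_le]
    simp
  · have hxu : ℓ x ≠ (0, 1) := fun e => hx (h.injective (e.trans hu.symm))
    have hpos : 0 < (ℓ x).1 := Nat.pos_of_ne_zero fun e => hxu (h.eq_zero_one_of_fst_eq_zero e)
    rw [pile_of_ne hx, hu, if_pos hpos, if_neg hxu, zero_add]

lemma two_le_rank_pile_root (h : G.IsQBLabelling m q ℓ) {u : V} (hu : ℓ u = (0, 1)) :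
    2 ≤ G.rank (pile ℓ u) := by
  have : Nonempty V := ⟨u⟩
  refine two_le_rank (fun v => ?_) fun w =>
    ⟨pile ℓ w, effective_pile w, ?_, h.pile_root_linEquiv hu w⟩
  · rw [h.pile_root hu]
    dsimp only
    split_ifs <;> norm_num
  · have hpos : 0 < #(lowerLevels ℓ (ℓ w).1) := card_pos.2 ⟨w, by simp⟩
    rw [pile_self]
    omega

/-! ### Divisors of positive rank -/

lemma card_add_card_le_sum_mult (h : G.IsQBLabelling m q ℓ) {v y : V} (hvy : IsParent ℓ v y)
    {U : Finset V} (hv : v ∈ U) (hy : y ∉ U) :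
    #(lowerLevels ℓ (ℓ v).1) + 1 + #(level ℓ (ℓ y).1 ∩ U) ≤
      ∑ x ∈ lowerLevels ℓ (ℓ y).1 ∩ U, G.mult x y := by
  have hnotMem : v ∉ level ℓ (ℓ y).1 ∩ U := by simp [← hvy.1]
  have hsub : insert v (level ℓ (ℓ y).1 ∩ U) ⊆ lowerLevels ℓ (ℓ y).1 ∩ U := by
    refine insert_subset (by simp [hv, ← hvy.1]) (inter_subset_inter_right fun x hx => ?_)
    exact mem_lowerLevels.2 (mem_level.1 hx).le
  have hone : ∀ x ∈ level ℓ (ℓ y).1 ∩ U, G.mult x y = 1 := fun x hx => by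
    obtain ⟨hxy, hxU⟩ := mem_inter.1 hx
    exact h.mult_of_fst_eq (fun e => hy (e ▸ hxU)) (mem_level.1 hxy)
  calc #(lowerLevels ℓ (ℓ v).1) + 1 + #(level ℓ (ℓ y).1 ∩ U)
      = ∑ x ∈ insert v (level ℓ (ℓ y).1 ∩ U), G.mult x y := by
        rw [sum_insert hnotMem, h.mult_of_isParent hvy, sum_congr rfl hone, ← card_eq_sum_ones]
    _ ≤ ∑ x ∈ lowerLevels ℓ (ℓ y).1 ∩ U, G.mult x y := sum_le_sum_of_subset hsub

lemma card_lowerLevels_le_sum_mult (h : G.IsQBLabelling m q ℓ) {v w : V} (hvw : IsParent ℓ v w)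
    {U : Finset V} (hU : ¬(v ∈ U ↔ w ∈ U)) :
    #(lowerLevels ℓ (ℓ w).1) ≤
      ∑ x ∈ lowerLevels ℓ (ℓ w).1 ∩ U, ∑ y ∈ lowerLevels ℓ (ℓ w).1 \ U, G.mult x y := by
  wlog hv : v ∈ U generalizing U
  · have hcompl := this (U := Uᶜ) (by simpa only [mem_compl, not_iff_not] using hU)
      (mem_compl.2 hv)
    rw [sdiff_compl, inf_eq_inter, ← sdiff_eq_inter_compl, sum_comm] at hcompl
    simpa only [G.symm] using hcompl
  set A := level ℓ (ℓ w).1 ∩ U with hA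
  set B := level ℓ (ℓ w).1 \ U with hB
  have hBpos : 1 ≤ #B := card_pos.2 ⟨w, mem_sdiff.2 ⟨mem_level.2 rfl, by tauto⟩⟩
  have hcard : #(lowerLevels ℓ (ℓ w).1) = #(lowerLevels ℓ (ℓ v).1) + (#A + #B) := by
    rw [hA, hB, card_inter_add_card_sdiff, ← hvw.1, card_lowerLevels_succ]
  have hsum : ∀ y ∈ B, #(lowerLevels ℓ (ℓ v).1) + 1 + #A ≤
      ∑ x ∈ lowerLevels ℓ (ℓ w).1 ∩ U, G.mult x y := fun y hy => by
    obtain ⟨hyw, hyU⟩ := mem_sdiff.1 hy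
    rw [hA, ← mem_level.1 hyw]
    exact h.card_add_card_le_sum_mult ⟨hvw.1.trans (mem_level.1 hyw).symm, hvw.2⟩ hv hyU
  calc #(lowerLevels ℓ (ℓ w).1) ≤ #B * (#(lowerLevels ℓ (ℓ v).1) + 1 + #A) := by
        rw [hcard]
        nlinarith
    _ ≤ ∑ y ∈ B, ∑ x ∈ lowerLevels ℓ (ℓ w).1 ∩ U, G.mult x y := by
        simpa only [smul_eq_mul] using card_nsmul_le_sum B _ _ hsum
    _ ≤ ∑ y ∈ lowerLevels ℓ (ℓ w).1 \ U, ∑ x ∈ lowerLevels ℓ (ℓ w).1 ∩ U, G.mult x y :=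
        sum_le_sum_of_subset (sdiff_subset_sdiff
          (fun x hx => mem_lowerLevels.2 (mem_level.1 hx).le) subset_rfl)
    _ = _ := sum_comm

lemma card_lowerLevels_le_sum (h : G.IsQBLabelling m q ℓ) (hD : Effective D) {U : Finset V}
    (hfire : Effective (D - G.laplacian ((U : Set V).indicator 1))) {v w : V}
    (hvw : IsParent ℓ v w) (hU : ¬(v ∈ U ↔ w ∈ U)) :
    (#(lowerLevels ℓ (ℓ w).1) : ℤ) ≤ ∑ x ∈ lowerLevels ℓ (ℓ w).1, D x := by
  have hout : ∀ x ∈ U, ∑ y ∈ lowerLevels ℓ (ℓ w).1 \ U, (G.mult x y : ℤ) ≤ D x := by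
    intro x hx
    refine (sum_le_sum_of_subset_of_nonneg (fun y hy => ?_) fun _ _ _ => Nat.cast_nonneg _).trans
      ((laplacian_indicator_of_mem G hx).symm.trans_le (sub_nonneg.1 (hfire x)))
    exact mem_compl.2 (mem_sdiff.1 hy).2
  calc (#(lowerLevels ℓ (ℓ w).1) : ℤ)
      ≤ ∑ x ∈ lowerLevels ℓ (ℓ w).1 ∩ U, ∑ y ∈ lowerLevels ℓ (ℓ w).1 \ U, (G.mult x y : ℤ) := by
        exact_mod_cast h.card_lowerLevels_le_sum_mult hvw hU
    _ ≤ ∑ x ∈ lowerLevels ℓ (ℓ w).1 ∩ U, D x :=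
        sum_le_sum fun x hx => hout x (mem_inter.1 hx).2
    _ ≤ ∑ x ∈ lowerLevels ℓ (ℓ w).1, D x :=
        sum_le_sum_of_subset_of_nonneg inter_subset_left fun x _ _ => hD x

lemma apply_eq_of_isParent_of_degree_lt (h : G.IsQBLabelling m q ℓ) (hD : Effective D)
    (hdeg : degree D < Fintype.card V) {f : V → ℤ} (hf : Effective (D - G.laplacian f)) {v w : V}
    (hvw : IsParent ℓ v w) (habove : ∀ E, Effective E → G.LinEquiv D E →
      ∀ x, (ℓ w).1 < (ℓ x).1 → 1 ≤ E x) : f v = f w := by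
  by_contra hne
  obtain ⟨D', U, hDD', hD', hfire, hU⟩ := exists_firing_separating hD hf hne
  have hlower := h.card_lowerLevels_le_sum hD' hfire hvw hU
  have hupper : (#(lowerLevels ℓ (ℓ w).1)ᶜ : ℤ) ≤ ∑ x ∈ (lowerLevels ℓ (ℓ w).1)ᶜ, D' x := by
    rw [card_eq_sum_ones, Nat.cast_sum, Nat.cast_one]
    exact sum_le_sum fun x hx => habove D' hD' hDD' x (by simpa using hx)
  have hsplit : ∑ x ∈ lowerLevels ℓ (ℓ w).1, D' x + ∑ x ∈ (lowerLevels ℓ (ℓ w).1)ᶜ, D' x =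
      degree D := by
    rw [sum_add_sum_compl, hDD'.degree_eq, degree]
  have hcard := card_add_card_compl (lowerLevels ℓ (ℓ w).1)
  omega

lemma laplacian_eq_zero_of_forall_isParent (h : G.IsQBLabelling m q ℓ) {f : V → ℤ} {j : ℕ}
    (hf : ∀ v w, IsParent ℓ v w → j ≤ (ℓ w).1 → f v = f w) {x : V} (hx : j ≤ (ℓ x).1) :
    G.laplacian f x = 0 := by
  refine G.laplacian_eq_zero_of_forall_adj fun y hxy => ?_
  rcases h.fst_eq_or_isParent_of_adj hxy with hlevel | hpar | hpar
  · by_cases hx0 : (ℓ x).1 = 0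
    · rw [h.injective ((h.eq_zero_one_of_fst_eq_zero hx0).trans
        (h.eq_zero_one_of_fst_eq_zero (hlevel ▸ hx0)).symm)]
    · obtain ⟨v, hv⟩ := h.exists_isParent hx0
      rw [← hf v x hv hx, hf v y ⟨hv.1.trans hlevel, hv.2⟩ (hlevel ▸ hx)]
  · exact hf x y hpar (hx.trans (Nat.le_of_succ_le hpar.1.le))
  · exact (hf y x hpar hx).symm

lemma apply_eq_of_isParent (h : G.IsQBLabelling m q ℓ) (hD : Effective D)
    (hdeg : degree D < Fintype.card V)
    (hpos : ∀ w, ∃ E, Effective E ∧ 0 < E w ∧ G.LinEquiv D E) {f : V → ℤ}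
    (hf : Effective (D - G.laplacian f)) {v w : V} (hvw : IsParent ℓ v w) : f v = f w := by
  suffices hdesc : ∀ j ≤ m + 1, ∀ g, Effective (D - G.laplacian g) →
      ∀ v w, IsParent ℓ v w → j ≤ (ℓ w).1 → g v = g w from
    hdesc 0 (Nat.zero_le _) f hf v w hvw (Nat.zero_le _)
  intro j hj
  induction hj using Nat.decreasingInduction with
  | self => exact fun _ _ _ w _ hw => absurd (h.fst_le w) (Nat.not_le_of_lt hw)
  | of_succ j _ ih =>
    intro g hg v w hvw hw
    rcases hw.eq_or_lt with rfl | hw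
    · refine h.apply_eq_of_isParent_of_degree_lt hD hdeg hg hvw ?_
      have hfix : ∀ g, Effective (D - G.laplacian g) → ∀ x, (ℓ w).1 < (ℓ x).1 →
          (D - G.laplacian g) x = D x := fun g hg x hx => by
        rw [Pi.sub_apply, h.laplacian_eq_zero_of_forall_isParent (ih g hg) hx, sub_zero]
      rintro _ hE ⟨g, rfl⟩ x hx
      obtain ⟨_, hE', hpos, g', rfl⟩ := hpos x
      rw [hfix g hE x hx, ← hfix g' hE' x hx]
      exact hpos
    · exact ih g hg v w hvw hw

lemma card_le_degree_of_effective (h : G.IsQBLabelling m q ℓ) (hD : Effective D)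
    (hpos : ∀ w, ∃ E, Effective E ∧ 0 < E w ∧ G.LinEquiv D E) :
    (Fintype.card V : ℤ) ≤ degree D := by
  by_contra! hdeg
  have hone : ∀ x, 1 ≤ D x := fun x => by
    obtain ⟨_, hE, hx, g, rfl⟩ := hpos x
    rwa [Pi.sub_apply, h.laplacian_eq_zero_of_forall_isParent
      (fun v w hvw _ => h.apply_eq_of_isParent hD hdeg hpos hE hvw) (Nat.zero_le _),
      sub_zero] at hx
  have hcard : #(univ : Finset V) • (1 : ℤ) ≤ degree D :=
    card_nsmul_le_sum univ D 1 fun x _ => hone x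
  rw [card_univ, nsmul_one] at hcard
  exact hdeg.not_ge hcard

lemma card_le_degree [Nonempty V] (h : G.IsQBLabelling m q ℓ) (hD : 1 ≤ G.rank D) :
    (Fintype.card V : ℤ) ≤ degree D := by
  have hpos := exists_effective_pos_of_one_le_rank hD
  obtain ⟨v⟩ := ‹Nonempty V›
  obtain ⟨D', hD', -, hDD'⟩ := hpos v
  rw [hDD'.degree_eq]
  refine h.card_le_degree_of_effective hD' fun w => ?_
  obtain ⟨E, hE, hw, hDE⟩ := hpos w
  exact ⟨E, hE, hw, hDD'.symm.trans hDE⟩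

end IsQBLabelling

end Multigraph

/-- For a quasi-banana graph `G = QB_m(N)`, the divisor
`u_{0,1} + ∑_{w ∈ V(G)} w` realises the second gonality. -/
theorem stmt16 (G : Multigraph V) (m : ℕ) (q : ℕ → ℕ) (ℓ : V → ℕ × ℕ)
    (hQB : G.IsQBLabelling m q ℓ) :
    G.Realises 2 (fun w => (if ℓ w = (0, 1) then 1 else 0) + 1) := by
  obtain ⟨u, hu⟩ := hQB.exists_eq_mk_one m.zero_le
  have : Nonempty V := ⟨u⟩
  rw [← hQB.pile_root hu]
  refine Multigraph.realises_of_forall_degree_le (hQB.two_le_rank_pile_root hu) fun D hD => ?_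
  have hrank : 1 ≤ G.rank (D - Pi.single u 1) :=
    Multigraph.le_rank_sub (Multigraph.effective_single u zero_le_one)
      (by rwa [Multigraph.degree_single u (1 : ℤ)])
  have hdeg := hQB.card_le_degree hrank
  rw [Multigraph.degree_sub, Multigraph.degree_single] at hdeg
  rw [Multigraph.degree_pile]
  exact le_sub_iff_add_le.1 hdeg
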